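/- For every ε > 0 there exists C_ε > 0 with the following property. For all dyadic N, N₁, N₂, N₃ ≥ 1, all m ∈ ℤ, and every fixed n ∈ ℤ², the number of triples (n₁, n₂, n₃) with (n, n₁, n₂, n₃) ∈ S^{𝐍,(m)} is at most C_ε · min( N₂² (min(N₁, N₃))^ε, (N₁ N₂)^{1+ε}, (N₁ N₃)^{1+ε}, (N₂ N₃)^{1+ε} ), uniformly in n and m. -/

import Mathlib

/-- Euclidean norm of a lattice point in `ℤ²`. -/
noncomputable def znorm (n : ℤ × ℤ) : ℝ := Real.sqrt ((n.1 : ℝ) ^ 2 + (n.2 : ℝ) ^ 2)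

/-- Squared Euclidean norm `|n|²` of `n ∈ ℤ²`, as an integer. -/
def nsq (n : ℤ × ℤ) : ℤ := n.1 ^ 2 + n.2 ^ 2

/-- `φ(n̄) = |n|² − |n₁|² + |n₂|² − |n₃|²`. -/
def phiFn (n n₁ n₂ n₃ : ℤ × ℤ) : ℤ := nsq n - nsq n₁ + nsq n₂ - nsq n₃

/-- `N` is a dyadic number: `N = 2^k` for some integer `k ≥ 0`. -/
def IsDyadic (N : ℝ) : Prop := ∃ k : ℕ, N = 2 ^ k

/-- `|n| ∼ N`: for dyadic `N ≥ 2` this means `N/2 < |n| ≤ N`; for `N = 1` it means `|n| ≤ 1`. -/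
def simDyadic (N : ℝ) (n : ℤ × ℤ) : Prop :=
  (N = 1 ∧ znorm n ≤ 1) ∨ (N ≠ 1 ∧ N / 2 < znorm n ∧ znorm n ≤ N)

/-- Membership in the set `S^{𝐍,(m)}`. -/
def SMem (N N₁ N₂ N₃ : ℝ) (m : ℤ) (n n₁ n₂ n₃ : ℤ × ℤ) : Prop :=
  n = n₁ - n₂ + n₃ ∧ n ≠ n₁ ∧ n ≠ n₃ ∧ phiFn n n₁ n₂ n₃ = m ∧
    simDyadic N n ∧ simDyadic N₁ n₁ ∧ simDyadic N₂ n₂ ∧ simDyadic N₃ n₃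

/-!
Put `u = n - n₁` and `v = n - n₃`. Then `u + v = n - n₂` and the phase is `2 u · v`, so the question
is how many pairs of nonzero lattice vectors with `u · v = c` there are when two of `u`, `v` and
`u + v` are confined to balls.

If `u + v = w` is given, `u - v` lies on the circle `|u - v|² = |w|² - 4c`. If `u₂` and `v₂` are
given, `(u₁, v₁)` lies on the hyperbola `u₁ v₁ = c - u₂ v₂`, except for the few pairs where this
degenerates. Either way it remains to see that a conic `Q = k` has `O(L ^ ε)` lattice points in any
ball of radius `L`, uniformly in `k` and in the centre. The number of all lattice points on such a
conic is at most a constant times the number of divisors of `k`, hence `O(k ^ ε)`, which suffices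
when `k` is at most a power of `L`. But three lattice points on `Q = k` satisfy
`Q (p - q) Q (p - r) Q (q - r) = -discrim · D ^ 2 · k` with `D` the integer `det (q - p, r - p)`;
when the left side is nonzero, `k` divides it and is therefore `O(L ^ 6)`.
-/

open Metric Finset

/-! ### The divisor bound -/

lemma natCast_add_one_le_one_add_inv_mul_pow {δ y : ℝ} (hδ : 0 < δ) (hy : 1 + δ ≤ y) (e : ℕ) :
    (e : ℝ) + 1 ≤ (1 + δ⁻¹) * y ^ e := by
  have bernoulli : 1 + e * δ ≤ y ^ e :=
    (one_add_mul_le_pow (by linarith) e).trans (by gcongr)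
  calc (e : ℝ) + 1 ≤ (e : ℝ) + 1 + (e * δ + δ⁻¹) := le_add_of_nonneg_right (by positivity)
    _ = (1 + δ⁻¹) * (1 + e * δ) := by field_simp; ring
    _ ≤ (1 + δ⁻¹) * y ^ e := by gcongr

lemma natCast_add_one_le_pow {y : ℝ} (hy : 2 ≤ y) (e : ℕ) : (e : ℝ) + 1 ≤ y ^ e :=
  calc (e : ℝ) + 1 = 1 + e * 1 := by ring
    _ ≤ (1 + 1) ^ e := one_add_mul_le_pow (by norm_num) e
    _ ≤ y ^ e := by gcongr; linarith

lemma natCast_rpow_eq_prod_primeFactors {n : ℕ} (hn : n ≠ 0) (ε : ℝ) :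
    (n : ℝ) ^ ε = ∏ p ∈ n.primeFactors, ((p : ℝ) ^ ε) ^ n.factorization p := by
  conv_lhs => rw [← Nat.prod_factorization_pow_eq_self hn]
  rw [Finsupp.prod, Nat.support_factorization, Nat.cast_prod,
    ← Real.finsetProd_rpow _ _ fun _ _ => by positivity]
  refine Finset.prod_congr rfl fun p _ => ?_
  rw [Nat.cast_pow, Real.rpow_pow_comm p.cast_nonneg]

/- Only the finitely many primes `p < 2 ^ (1 / ε)` cost a constant: for the others `p ^ ε ≥ 2`. -/
lemma natCast_add_one_le_ite_mul_rpow_pow {ε : ℝ} (hε : 0 < ε) {P p : ℕ}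
    (hP : (2 : ℝ) ^ ε⁻¹ ≤ P) (hp : 2 ≤ p) (e : ℕ) :
    (e : ℝ) + 1 ≤ (if p < P then 1 + (2 ^ ε - 1 : ℝ)⁻¹ else 1) * ((p : ℝ) ^ ε) ^ e := by
  have hp2 : (2 : ℝ) ≤ p := mod_cast hp
  split_ifs with hpP
  · refine natCast_add_one_le_one_add_inv_mul_pow
      (sub_pos.2 (Real.one_lt_rpow one_lt_two hε)) ?_ e
    rw [add_sub_cancel]
    gcongr
  · rw [one_mul]
    refine natCast_add_one_le_pow ?_ e
    rw [← Real.rpow_inv_le_iff_of_pos zero_le_two p.cast_nonneg hε]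
    exact hP.trans (mod_cast not_lt.1 hpP)

theorem exists_card_divisors_le_mul_rpow {ε : ℝ} (hε : 0 < ε) :
    ∃ C : ℝ, 0 < C ∧ ∀ n : ℕ, (#n.divisors : ℝ) ≤ C * (n : ℝ) ^ ε := by
  obtain ⟨P, hP⟩ := exists_nat_ge ((2 : ℝ) ^ ε⁻¹)
  set K : ℝ := 1 + (2 ^ ε - 1)⁻¹
  have hK : 1 ≤ K := le_add_of_nonneg_right
    (inv_nonneg.2 (sub_nonneg.2 (Real.one_le_rpow one_le_two hε.le)))
  have prod_le (n : ℕ) : ∏ p ∈ n.primeFactors, (if p < P then K else 1) ≤ K ^ P := by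
    rw [← Finset.prod_filter, Finset.prod_const]
    refine pow_le_pow_right₀ hK ((card_le_card fun p hp => ?_).trans_eq (card_range P))
    exact mem_range.2 (mem_filter.1 hp).2
  refine ⟨K ^ P, by positivity, fun n => ?_⟩
  rcases eq_or_ne n 0 with rfl | hn
  · simp only [Nat.divisors_zero, card_empty, Nat.cast_zero]
    positivity
  calc (#n.divisors : ℝ)
      = ∏ p ∈ n.primeFactors, ((n.factorization p : ℝ) + 1) := by
        rw [Nat.card_divisors hn]; push_cast; rfl
    _ ≤ ∏ p ∈ n.primeFactors, (if p < P then K else 1) * ((p : ℝ) ^ ε) ^ n.factorization p :=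
        Finset.prod_le_prod (fun _ _ => by positivity) fun p hp =>
          natCast_add_one_le_ite_mul_rpow_pow hε hP (Nat.prime_of_mem_primeFactors hp).two_le _
    _ = (∏ p ∈ n.primeFactors, (if p < P then K else 1)) * (n : ℝ) ^ ε := by
        rw [Finset.prod_mul_distrib, natCast_rpow_eq_prod_primeFactors hn]
    _ ≤ K ^ P * (n : ℝ) ^ ε := by gcongr; exact prod_le n

lemma le_card_divisors_mul_of_prime_pow_mul_le {f : ℕ → ℕ}
    (hf : ∀ p e m : ℕ, p.Prime → ¬p ∣ m → f (p ^ e * m) ≤ (e + 1) * f m) {n : ℕ} (hn : n ≠ 0) :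
    f n ≤ #n.divisors * f 1 := by
  induction n using Nat.recOnPrimePow with
  | zero => exact absurd rfl hn
  | one => simp
  | prime_pow_mul m p e hp hpm _ ih =>
    have hcop : (p ^ e).Coprime m := .pow_left e (hp.coprime_iff_not_dvd.2 hpm)
    calc f (p ^ e * m) ≤ (e + 1) * f m := hf p e m hp hpm
      _ ≤ (e + 1) * (#m.divisors * f 1) := by gcongr; exact ih (right_ne_zero_of_mul hn)
      _ = #(p ^ e * m).divisors * f 1 := by
        rw [hcop.card_divisors_mul, Nat.divisors_prime_pow hp, card_map, card_range, mul_assoc]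

/-! ### Gaussian integers of given norm -/

lemma finite_setOf_gaussianInt_norm_eq (n : ℕ) : {z : GaussianInt | z.norm = n}.Finite := by
  have hbox : ((fun p : ℤ × ℤ => (⟨p.1, p.2⟩ : GaussianInt)) ''
      (Set.Icc (-(n : ℤ)) n ×ˢ Set.Icc (-(n : ℤ)) n)).Finite :=
    ((Set.finite_Icc _ _).prod (Set.finite_Icc _ _)).image _
  refine hbox.subset fun z (hz : z.norm = n) => ⟨(z.re, z.im), ?_, rfl⟩
  rw [Zsqrtd.norm_def] at hz
  have hre : |z.re| ≤ z.re ^ 2 := Int.abs_eq_natAbs z.re ▸ Int.natAbs_le_self_sq z.re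
  have him : |z.im| ≤ z.im ^ 2 := Int.abs_eq_natAbs z.im ▸ Int.natAbs_le_self_sq z.im
  rw [Set.mem_prod, Set.mem_Icc, Set.mem_Icc, ← abs_le, ← abs_le]
  constructor <;> nlinarith [sq_nonneg z.re, sq_nonneg z.im]

/-- The Gaussian integers of norm `n`: the representations of `n` as a sum of two squares. -/
noncomputable def gaussianIntsOfNorm (n : ℕ) : Finset GaussianInt :=
  (finite_setOf_gaussianInt_norm_eq n).toFinset

lemma mem_gaussianIntsOfNorm {n : ℕ} {z : GaussianInt} :
    z ∈ gaussianIntsOfNorm n ↔ z.norm = n := by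
  simp [gaussianIntsOfNorm]

lemma exists_prime_gaussianInt_dvd {p : ℕ} (hp : p.Prime) :
    ∃ w : GaussianInt, Prime w ∧ w ∣ p ∧ ∃ f ≠ 0, w.norm = (p ^ f : ℕ) := by
  have hp_norm : (p : GaussianInt).norm.natAbs = p ^ 2 := by
    rw [Zsqrtd.norm_natCast, ← sq, Int.natAbs_pow, Int.natAbs_natCast]
  have hp_unit : ¬IsUnit (p : GaussianInt) := by
    rw [← Zsqrtd.norm_eq_one_iff, hp_norm]
    exact (Nat.one_lt_pow two_ne_zero hp.one_lt).ne'
  obtain ⟨w, hw, hwp⟩ := WfDvdMonoid.exists_irreducible_factor hp_unit (mod_cast hp.ne_zero)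
  refine ⟨w, hw.prime, hwp, ?_⟩
  have hw_norm : w.norm.natAbs ∣ p ^ 2 := by
    rw [← hp_norm]
    exact Int.natAbs_dvd_natAbs.2 (map_dvd Zsqrtd.normMonoidHom hwp)
  obtain ⟨f, -, hf⟩ := (Nat.dvd_prime_pow hp).1 hw_norm
  refine ⟨f, ?_, by rw [← hf, GaussianInt.abs_natCast_norm]⟩
  rintro rfl
  exact hw.not_isUnit (Zsqrtd.norm_eq_one_iff.1 hf)

lemma exists_eq_pow_mul_star_pow_mul {p : ℕ} {w z : GaussianInt} (hw : Prime w)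
    (hwp : w ∣ p) (hz : z ≠ 0) :
    ∃ i j v, z = w ^ i * star w ^ j * v ∧ ¬(p : ℤ) ∣ v.norm := by
  have hw_star : Prime (star w) := by
    simpa using (MulEquiv.prime_iff (starMulAut (R := GaussianInt))).2 hw
  obtain ⟨i, z', hwz', rfl⟩ := WfDvdMonoid.max_power_factor hz hw.irreducible
  obtain ⟨j, v, hwv, rfl⟩ :=
    WfDvdMonoid.max_power_factor (right_ne_zero_of_mul hz) hw_star.irreducible
  refine ⟨i, j, v, (mul_assoc _ _ _).symm, fun hpv => ?_⟩
  have hdvd : w ∣ v * star v := by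
    rw [← Zsqrtd.norm_eq_mul_conj]
    exact hwp.trans (mod_cast (Int.cast_dvd_cast _ _ hpv : ((p : ℤ) : GaussianInt) ∣ _))
  rcases hw.dvd_or_dvd hdvd with h | h
  · exact hwz' (h.mul_left _)
  · refine hwv ?_
    simpa only [starRingEnd_apply, star_star] using map_dvd (starRingEnd GaussianInt) h

lemma eq_and_eq_of_prime_pow_mul_eq {p a b m r : ℕ} (hp : p.Prime) (hm : ¬p ∣ m) (hr : ¬p ∣ r)
    (h : p ^ a * m = p ^ b * r) : a = b ∧ m = r := by
  have hpow : p ^ a = p ^ b := by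
    refine Nat.dvd_antisymm ?_ ?_
    · exact (Nat.Coprime.pow_left a (hp.coprime_iff_not_dvd.2 hr)).dvd_of_dvd_mul_right ⟨m, h.symm⟩
    · exact (Nat.Coprime.pow_left b (hp.coprime_iff_not_dvd.2 hm)).dvd_of_dvd_mul_right ⟨r, h⟩
  exact ⟨Nat.pow_right_injective hp.two_le hpow,
    Nat.eq_of_mul_eq_mul_left (pow_pos hp.pos b) (hpow ▸ h)⟩

lemma exists_eq_pow_mul_star_pow_mul_of_norm_eq {p e m f : ℕ} (hp : p.Prime) (hpm : ¬p ∣ m)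
    {w z : GaussianInt} (hw : Prime w) (hwp : w ∣ p) (hwf : w.norm = (p ^ f : ℕ))
    (hz : z.norm = (p ^ e * m : ℕ)) :
    ∃ i j v, z = w ^ i * star w ^ j * v ∧ f * (i + j) = e ∧ v.norm = m := by
  have hz0 : z ≠ 0 := by
    rintro rfl
    have hm : m ≠ 0 := fun h => hpm (h ▸ dvd_zero p)
    rw [Zsqrtd.norm_zero] at hz
    exact mul_ne_zero (pow_ne_zero e hp.ne_zero) hm (mod_cast hz.symm)
  obtain ⟨i, j, v, rfl, hpv⟩ := exists_eq_pow_mul_star_pow_mul hw hwp hz0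
  have norm_pow (x : GaussianInt) (k : ℕ) : (x ^ k).norm = x.norm ^ k :=
    map_pow Zsqrtd.normMonoidHom x k
  have hnorm : p ^ (f * (i + j)) * v.norm.natAbs = p ^ e * m := by
    rw [← Int.natCast_inj, ← hz, Nat.cast_mul, GaussianInt.abs_natCast_norm, Zsqrtd.norm_mul,
      Zsqrtd.norm_mul, norm_pow, norm_pow, Zsqrtd.norm_conj, hwf]
    push_cast
    ring
  obtain ⟨hij, hv⟩ := eq_and_eq_of_prime_pow_mul_eq hp (by rwa [← Int.natCast_dvd]) hpm hnorm
  exact ⟨i, j, v, rfl, hij, by rw [← hv, GaussianInt.abs_natCast_norm]⟩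

lemma card_gaussianIntsOfNorm_prime_pow_mul_le {p e m : ℕ} (hp : p.Prime) (hpm : ¬p ∣ m) :
    #(gaussianIntsOfNorm (p ^ e * m)) ≤ (e + 1) * #(gaussianIntsOfNorm m) := by
  obtain ⟨w, hw, hwp, f, hf, hwf⟩ := exists_prime_gaussianInt_dvd hp
  let F (x : ℕ × GaussianInt) : GaussianInt := w ^ x.1 * star w ^ (e / f - x.1) * x.2
  have hcover : gaussianIntsOfNorm (p ^ e * m) ⊆
      (range (e + 1) ×ˢ gaussianIntsOfNorm m).image F := by
    intro z hz
    obtain ⟨i, j, v, rfl, rfl, hv⟩ := exists_eq_pow_mul_star_pow_mul_of_norm_eq hp hpm hw hwp hwf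
      (mem_gaussianIntsOfNorm.1 hz)
    have hi : i < f * (i + j) + 1 := by nlinarith [Nat.one_le_iff_ne_zero.2 hf]
    refine mem_image.2 ⟨(i, v), mem_product.2 ⟨mem_range.2 hi, mem_gaussianIntsOfNorm.2 hv⟩, ?_⟩
    simp only [F, Nat.mul_div_cancel_left _ (Nat.pos_of_ne_zero hf), Nat.add_sub_cancel_left]
  calc #(gaussianIntsOfNorm (p ^ e * m))
      ≤ #((range (e + 1) ×ˢ gaussianIntsOfNorm m).image F) := card_le_card hcover
    _ ≤ #(range (e + 1) ×ˢ gaussianIntsOfNorm m) := card_image_le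
    _ = (e + 1) * #(gaussianIntsOfNorm m) := by rw [card_product, card_range]

lemma card_gaussianIntsOfNorm_le {n : ℕ} (hn : n ≠ 0) :
    #(gaussianIntsOfNorm n) ≤ #n.divisors * #(gaussianIntsOfNorm 1) :=
  le_card_divisors_mul_of_prime_pow_mul_le (f := fun n => #(gaussianIntsOfNorm n))
    (fun _ _ _ hp hpm => card_gaussianIntsOfNorm_prime_pow_mul_le hp hpm) hn

/-! ### Lattice points on conics -/

/-- The values of the binary quadratic form `a x² + b x y + c y²`; its level sets are the conics
whose lattice points are counted below. -/
def binaryForm {R : Type*} [CommRing R] (a b c : R) (p : R × R) : R :=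
  a * p.1 ^ 2 + b * p.1 * p.2 + c * p.2 ^ 2

/- The Gram determinant of three vectors of the plane vanishes; on a level set this expresses the
product of the three chord lengths through the area of the triangle, as in `abc = 4RΔ`. -/
lemma binaryForm_sub_mul_sub_mul_sub {R : Type*} [CommRing R] {a b c k : R} {p q r : R × R}
    (hp : binaryForm a b c p = k) (hq : binaryForm a b c q = k) (hr : binaryForm a b c r = k) :
    binaryForm a b c (p - q) * binaryForm a b c (p - r) * binaryForm a b c (q - r) =
      -discrim a b c * ((q - p).1 * (r - p).2 - (q - p).2 * (r - p).1) ^ 2 * k := by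
  let polar (x y : R × R) : R := 2 * a * x.1 * y.1 + b * (x.1 * y.2 + x.2 * y.1) + 2 * c * x.2 * y.2
  have sub_eq (x y : R × R) :
      binaryForm a b c (x - y) = binaryForm a b c x + binaryForm a b c y - polar x y := by
    simp only [binaryForm, polar, Prod.fst_sub, Prod.snd_sub]; ring
  have gram : 4 * binaryForm a b c p * binaryForm a b c q * binaryForm a b c r +
      polar p q * polar p r * polar q r - binaryForm a b c p * polar q r ^ 2 -
      binaryForm a b c q * polar p r ^ 2 - binaryForm a b c r * polar p q ^ 2 = 0 := by
    simp only [binaryForm, polar]; ring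
  have heron : -discrim a b c * ((q - p).1 * (r - p).2 - (q - p).2 * (r - p).1) ^ 2 =
      4 * binaryForm a b c (p - q) * binaryForm a b c (p - r) -
      (binaryForm a b c (p - q) + binaryForm a b c (p - r) - binaryForm a b c (q - r)) ^ 2 := by
    simp only [binaryForm, discrim, Prod.fst_sub, Prod.snd_sub]; ring
  rw [heron]
  simp only [sub_eq]
  rw [hp, hq, hr] at gram ⊢
  linear_combination -gram

lemma abs_binaryForm_le (a b c : ℤ) (p : ℤ × ℤ) :
    |((binaryForm a b c p : ℤ) : ℝ)| ≤ ((|a| + |b| + |c| : ℤ) : ℝ) * ‖p‖ ^ 2 := by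
  have h₁ : |(p.1 : ℝ)| ≤ ‖p‖ := (Int.norm_eq_abs p.1).ge.trans (norm_fst_le p)
  have h₂ : |(p.2 : ℝ)| ≤ ‖p‖ := (Int.norm_eq_abs p.2).ge.trans (norm_snd_le p)
  calc |((binaryForm a b c p : ℤ) : ℝ)|
      = |(a : ℝ) * (p.1 : ℝ) ^ 2 + b * p.1 * p.2 + c * (p.2 : ℝ) ^ 2| := by
        rw [binaryForm]; push_cast; rfl
    _ ≤ |(a : ℝ)| * |(p.1 : ℝ)| ^ 2 + |(b : ℝ)| * |(p.1 : ℝ)| * |(p.2 : ℝ)|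
        + |(c : ℝ)| * |(p.2 : ℝ)| ^ 2 := by
      refine (abs_add_three _ _ _).trans_eq ?_
      simp only [abs_mul, abs_pow]
    _ ≤ |(a : ℝ)| * ‖p‖ ^ 2 + |(b : ℝ)| * ‖p‖ * ‖p‖ + |(c : ℝ)| * ‖p‖ ^ 2 := by gcongr
    _ = ((|a| + |b| + |c| : ℤ) : ℝ) * ‖p‖ ^ 2 := by push_cast; ring

lemma ne_zero_and_abs_le_of_two_lt_card_of_binaryForm_eq {a b c k : ℤ} {B : ℝ}
    {S : Finset (ℤ × ℤ)} (hS : ∀ p ∈ S, binaryForm a b c p = k)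
    (hne : (S : Set (ℤ × ℤ)).Pairwise fun p q => binaryForm a b c (p - q) ≠ 0)
    (hB : ∀ p ∈ S, ∀ q ∈ S, |((binaryForm a b c (p - q) : ℤ) : ℝ)| ≤ B) (hcard : 2 < #S) :
    k ≠ 0 ∧ |(k : ℝ)| ≤ B ^ 3 := by
  obtain ⟨p, hp, q, hq, r, hr, hpq, hpr, hqr⟩ := two_lt_card.1 hcard
  have hprod := binaryForm_sub_mul_sub_mul_sub (hS p hp) (hS q hq) (hS r hr)
  have hprod_ne := mul_ne_zero (mul_ne_zero (hne hp hq hpq) (hne hp hr hpr)) (hne hq hr hqr)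
  have hk_dvd := Dvd.intro_left _ hprod.symm
  refine ⟨ne_zero_of_dvd_ne_zero hprod_ne hk_dvd, ?_⟩
  have hk_le : |k| ≤
      |binaryForm a b c (p - q) * binaryForm a b c (p - r) * binaryForm a b c (q - r)| :=
    Int.le_of_dvd (abs_pos.2 hprod_ne) ((abs_dvd_abs _ _).2 hk_dvd)
  have hB0 : 0 ≤ B := (abs_nonneg _).trans (hB p hp q hq)
  calc |(k : ℝ)| ≤ |((binaryForm a b c (p - q) : ℤ) : ℝ)| * |((binaryForm a b c (p - r) : ℤ) : ℝ)|
        * |((binaryForm a b c (q - r) : ℤ) : ℝ)| := by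
        simp only [abs_mul] at hk_le
        exact_mod_cast hk_le
    _ ≤ B * B * B := by gcongr; exacts [hB p hp q hq, hB p hp r hr, hB q hq r hr]
    _ = B ^ 3 := by ring

theorem exists_card_le_mul_rpow_of_binaryForm_eq {a b c : ℤ} {K ε : ℝ} (hε : 0 < ε)
    (hK : ∀ k ≠ 0, ∀ S : Finset (ℤ × ℤ), (∀ p ∈ S, binaryForm a b c p = k) →
      (#S : ℝ) ≤ K * #k.natAbs.divisors) :
    ∃ C : ℝ, 0 < C ∧ ∀ L : ℝ, 1 ≤ L → ∀ (k : ℤ) (x : ℤ × ℤ) (S : Finset (ℤ × ℤ)),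
      (∀ p ∈ S, p ∈ closedBall x L ∧ binaryForm a b c p = k) →
      ((S : Set (ℤ × ℤ)).Pairwise fun p q => binaryForm a b c (p - q) ≠ 0) →
      (#S : ℝ) ≤ C * L ^ ε := by
  obtain ⟨C₀, hC₀, hdiv⟩ := exists_card_divisors_le_mul_rpow (ε := ε / 6) (by positivity)
  have hK0 : 0 ≤ K := by simpa using hK 1 one_ne_zero ∅ (by simp)
  set M : ℝ := ((|a| + |b| + |c| : ℤ) : ℝ)
  have : 0 ≤ M := by positivity
  set D : ℝ := (64 * M ^ 3) ^ (ε / 6)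
  refine ⟨2 + K * C₀ * D, by positivity, fun L hL k x S hS hne => ?_⟩
  have hLε : 1 ≤ L ^ ε := Real.one_le_rpow hL hε.le
  rcases le_or_gt #S 2 with hcard | hcard
  · calc (#S : ℝ) ≤ 2 := mod_cast hcard
      _ ≤ (2 + K * C₀ * D) * 1 := by rw [mul_one]; exact le_add_of_nonneg_right (by positivity)
      _ ≤ (2 + K * C₀ * D) * L ^ ε := by gcongr
  have hchord (p) (hp : p ∈ S) (q) (hq : q ∈ S) :
      |((binaryForm a b c (p - q) : ℤ) : ℝ)| ≤ M * (2 * L) ^ 2 := by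
    refine (abs_binaryForm_le a b c (p - q)).trans ?_
    rw [← dist_eq_norm, two_mul]
    gcongr
    exact (dist_triangle_right p q x).trans (add_le_add (hS p hp).1 (hS q hq).1)
  obtain ⟨hk, hkL⟩ := ne_zero_and_abs_le_of_two_lt_card_of_binaryForm_eq
    (fun p hp => (hS p hp).2) hne hchord hcard
  calc (#S : ℝ) ≤ K * #k.natAbs.divisors := hK k hk S fun p hp => (hS p hp).2
    _ ≤ K * (C₀ * |(k : ℝ)| ^ (ε / 6)) := by
      gcongr
      simpa only [Nat.cast_natAbs, Int.cast_abs] using hdiv k.natAbs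
    _ ≤ K * (C₀ * (64 * M ^ 3 * L ^ 6) ^ (ε / 6)) := by
      gcongr
      exact hkL.trans_eq (by ring)
    _ = K * C₀ * D * L ^ ε := by
      rw [Real.mul_rpow (by positivity) (by positivity), ← Real.rpow_natCast_mul (by positivity)]
      rw [Nat.cast_ofNat, mul_div_cancel₀ _ (by norm_num)]
      ring
    _ ≤ (2 + K * C₀ * D) * L ^ ε := by gcongr; linarith

lemma card_le_two_mul_card_divisors_of_mul_eq {k : ℤ} (hk : k ≠ 0) {S : Finset (ℤ × ℤ)}
    (hS : ∀ p ∈ S, p.1 * p.2 = k) : #S ≤ 2 * #k.natAbs.divisors := by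
  have hinj : Set.InjOn Prod.fst (S : Set (ℤ × ℤ)) := by
    intro p hp q hq (h : p.1 = q.1)
    have hp0 : p.1 ≠ 0 := left_ne_zero_of_mul ((hS p hp).trans_ne hk)
    refine Prod.ext h (mul_left_cancel₀ hp0 ?_)
    rw [hS p hp, h, hS q hq]
  calc #S = #(S.image Prod.fst) := (card_image_of_injOn hinj).symm
    _ ≤ #k.divisors := card_le_card fun d hd => by
      obtain ⟨p, hp, rfl⟩ := mem_image.1 hd
      exact Int.mem_divisors.2 ⟨Dvd.intro _ (hS p hp), hk⟩
    _ = 2 * #k.natAbs.divisors := by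
      rw [Int.divisors, card_disjUnion, card_map, card_map, two_mul]

theorem exists_card_le_mul_rpow_of_mul_eq {ε : ℝ} (hε : 0 < ε) :
    ∃ C : ℝ, 0 < C ∧ ∀ L : ℝ, 1 ≤ L → ∀ (k : ℤ) (x : ℤ × ℤ) (S : Finset (ℤ × ℤ)), k ≠ 0 →
      (∀ p ∈ S, p ∈ closedBall x L ∧ p.1 * p.2 = k) → (#S : ℝ) ≤ C * L ^ ε := by
  have form_eq (p : ℤ × ℤ) : binaryForm 0 1 0 p = p.1 * p.2 := by simp [binaryForm]
  obtain ⟨C, hC, h⟩ := exists_card_le_mul_rpow_of_binaryForm_eq (a := 0) (b := 1) (c := 0) (K := 2)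
    hε fun k hk S hS => mod_cast card_le_two_mul_card_divisors_of_mul_eq hk
      fun p hp => (form_eq p).symm.trans (hS p hp)
  refine ⟨C, hC, fun L hL k x S hk hS => h L hL k x S ?_ ?_⟩
  · simpa only [form_eq] using hS
  · intro p hp q hq hpq hzero
    have hpk := (hS p hp).2
    have hqk := (hS q hq).2
    rw [form_eq, Prod.fst_sub, Prod.snd_sub, mul_eq_zero, sub_eq_zero, sub_eq_zero] at hzero
    refine hpq ?_
    rcases hzero with h₁ | h₂
    · have hp0 : p.1 ≠ 0 := left_ne_zero_of_mul (hpk.trans_ne hk)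
      refine Prod.ext h₁ (mul_left_cancel₀ hp0 ?_)
      rw [hpk, h₁, hqk]
    · have hp0 : p.2 ≠ 0 := right_ne_zero_of_mul (hpk.trans_ne hk)
      refine Prod.ext (mul_right_cancel₀ hp0 ?_) h₂
      rw [hpk, h₂, hqk]

lemma card_le_mul_card_divisors_of_nsq_eq {k : ℤ} (hk : k ≠ 0) {S : Finset (ℤ × ℤ)}
    (hS : ∀ p ∈ S, nsq p = k) : #S ≤ #(gaussianIntsOfNorm 1) * #k.natAbs.divisors := by
  let toGaussianInt (p : ℤ × ℤ) : GaussianInt := ⟨p.1, p.2⟩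
  have hinj : Function.Injective toGaussianInt := fun p q h =>
    Prod.ext (congrArg Zsqrtd.re h) (congrArg Zsqrtd.im h)
  calc #S = #(S.image toGaussianInt) := (card_image_of_injective S hinj).symm
    _ ≤ #(gaussianIntsOfNorm k.natAbs) := card_le_card fun z hz => by
      obtain ⟨p, hp, rfl⟩ := mem_image.1 hz
      have hpk : (toGaussianInt p).norm = k := by
        rw [← hS p hp, nsq, Zsqrtd.norm_def]; ring
      rw [mem_gaussianIntsOfNorm, ← hpk, GaussianInt.abs_natCast_norm]
    _ ≤ #k.natAbs.divisors * #(gaussianIntsOfNorm 1) :=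
      card_gaussianIntsOfNorm_le (Int.natAbs_ne_zero.2 hk)
    _ = #(gaussianIntsOfNorm 1) * #k.natAbs.divisors := mul_comm _ _

lemma nsq_eq_zero {p : ℤ × ℤ} : nsq p = 0 ↔ p = 0 := by
  rw [nsq, add_eq_zero_iff_of_nonneg (sq_nonneg _) (sq_nonneg _), sq_eq_zero_iff, sq_eq_zero_iff,
    Prod.ext_iff, Prod.fst_zero, Prod.snd_zero]

theorem exists_card_le_mul_rpow_of_nsq_eq {ε : ℝ} (hε : 0 < ε) :
    ∃ C : ℝ, 0 < C ∧ ∀ L : ℝ, 1 ≤ L → ∀ (k : ℤ) (x : ℤ × ℤ) (S : Finset (ℤ × ℤ)),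
      (∀ p ∈ S, p ∈ closedBall x L ∧ nsq p = k) → (#S : ℝ) ≤ C * L ^ ε := by
  have form_eq (p : ℤ × ℤ) : binaryForm 1 0 1 p = nsq p := by simp [binaryForm, nsq]
  obtain ⟨C, hC, h⟩ := exists_card_le_mul_rpow_of_binaryForm_eq (a := 1) (b := 0) (c := 1)
    (K := #(gaussianIntsOfNorm 1)) hε fun k hk S hS =>
      mod_cast card_le_mul_card_divisors_of_nsq_eq hk fun p hp => (form_eq p).symm.trans (hS p hp)
  refine ⟨C, hC, fun L hL k x S hS => h L hL k x S ?_ fun p _ q _ hpq => ?_⟩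
  · simpa only [form_eq] using hS
  · simpa only [form_eq, nsq_eq_zero, ne_eq, sub_eq_zero] using hpq

/-! ### Pairs of lattice vectors with given inner product -/

lemma card_le_three_mul_of_forall_mem_closedBall {A : ℝ} {a : ℤ} {S : Finset ℤ} (hA : 1 ≤ A)
    (hS : ∀ x ∈ S, x ∈ closedBall a A) : (#S : ℝ) ≤ 3 * A := by
  have hsub : S ⊆ Icc ⌈a - A⌉ ⌊a + A⌋ := fun x hx => by
    simpa only [Int.closedBall_eq_Icc, Set.mem_Icc, ← Finset.mem_Icc] using hS x hx
  have hcard : (#S : ℤ) ≤ max (⌊a + A⌋ + 1 - ⌈a - A⌉) 0 := by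
    rw [← Int.ofNat_toNat, ← Int.card_Icc]
    exact_mod_cast card_le_card hsub
  calc (#S : ℝ) ≤ max ((⌊a + A⌋ : ℝ) + 1 - ⌈a - A⌉) 0 := mod_cast hcard
    _ ≤ 3 * A := max_le (by linarith [Int.floor_le (a + A), Int.le_ceil (a - A)]) (by linarith)

lemma mem_closedBall_prod_iff {α β : Type*} [PseudoMetricSpace α] [PseudoMetricSpace β]
    {p x : α × β} {r : ℝ} :
    p ∈ closedBall x r ↔ p.1 ∈ closedBall x.1 r ∧ p.2 ∈ closedBall x.2 r := by
  simp only [mem_closedBall, Prod.dist_eq, max_le_iff]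

lemma card_le_nine_mul_of_forall_mem_closedBall {A B : ℝ} {a b : ℤ} {S : Finset (ℤ × ℤ)}
    (hA : 1 ≤ A) (hB : 1 ≤ B) (hS : ∀ p ∈ S, p.1 ∈ closedBall a A ∧ p.2 ∈ closedBall b B) :
    (#S : ℝ) ≤ 9 * (A * B) := by
  have h₁ : (#(S.image Prod.fst) : ℝ) ≤ 3 * A :=
    card_le_three_mul_of_forall_mem_closedBall hA <| forall_mem_image.2 fun p hp => (hS p hp).1
  have h₂ : (#(S.image Prod.snd) : ℝ) ≤ 3 * B :=
    card_le_three_mul_of_forall_mem_closedBall hB <| forall_mem_image.2 fun p hp => (hS p hp).2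
  calc (#S : ℝ) ≤ #(S.image Prod.fst) * #(S.image Prod.snd) := by
        rw [← Nat.cast_mul, ← card_product]
        exact_mod_cast card_le_card subset_product
    _ ≤ 3 * A * (3 * B) := by gcongr
    _ = 9 * (A * B) := by ring

lemma card_le_mul_card_image_of_injective {ι α β : Type*} [DecidableEq β]
    {f : ι → α} {g : ι → β} {S : Finset ι} {K : ℝ} (hfg : Function.Injective fun x => (f x, g x))
    (h : ∀ b, ∀ R : Finset α, (∀ a ∈ R, ∃ x ∈ S, f x = a ∧ g x = b) → (#R : ℝ) ≤ K) :
    (#S : ℝ) ≤ K * #(S.image g) := by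
  classical
  have fibre_le (b : β) : (#{x ∈ S | g x = b} : ℝ) ≤ K := by
    have hinj : Set.InjOn f ({x ∈ S | g x = b} : Finset ι) := fun x hx y hy hxy =>
      hfg (Prod.ext hxy ((mem_filter.1 hx).2.trans (mem_filter.1 hy).2.symm))
    rw [← card_image_of_injOn hinj]
    refine h b _ (forall_mem_image.2 fun x hx => ?_)
    exact ⟨x, (mem_filter.1 hx).1, rfl, (mem_filter.1 hx).2⟩
  calc (#S : ℝ) = ∑ b ∈ S.image g, (#{x ∈ S | g x = b} : ℝ) := by
        rw [← Nat.cast_sum, ← card_eq_sum_card_image]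
    _ ≤ ∑ _b ∈ S.image g, K := sum_le_sum fun b _ => fibre_le b
    _ = K * #(S.image g) := by rw [sum_const, nsmul_eq_mul, mul_comm]

/-- The Euclidean inner product on `ℤ²`, in terms of which the phase `phiFn` factors. -/
def latticeDot (u v : ℤ × ℤ) : ℤ := u.1 * v.1 + u.2 * v.2

lemma latticeDot_comm (u v : ℤ × ℤ) : latticeDot u v = latticeDot v u := by
  simp only [latticeDot, mul_comm]

lemma nsq_sub (u v : ℤ × ℤ) : nsq (u - v) = nsq (u + v) - 4 * latticeDot u v := by
  simp only [nsq, latticeDot, Prod.fst_sub, Prod.snd_sub, Prod.fst_add, Prod.snd_add]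
  ring

/- With `w = u + v` fixed, `u - v` lies on the circle `|u - v|² = |w|² - 4c`. -/
theorem exists_card_pairs_le_mul_sq_mul_rpow_of_add_mem {ε : ℝ} (hε : 0 < ε) :
    ∃ C : ℝ, 0 < C ∧ ∀ A B : ℝ, 1 ≤ A → 1 ≤ B → ∀ (c : ℤ) (a b : ℤ × ℤ)
      (S : Finset ((ℤ × ℤ) × (ℤ × ℤ))),
      (∀ x ∈ S, x.1 ∈ closedBall a A ∧ x.1 + x.2 ∈ closedBall b B ∧ latticeDot x.1 x.2 = c) →
      (#S : ℝ) ≤ C * (B ^ 2 * A ^ ε) := by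
  obtain ⟨C, hC, hcircle⟩ := exists_card_le_mul_rpow_of_nsq_eq hε
  refine ⟨9 * C * 2 ^ ε, by positivity, fun A B hA hB c a b S hS => ?_⟩
  have hinj : Function.Injective fun x : (ℤ × ℤ) × (ℤ × ℤ) => (x.1 - x.2, x.1 + x.2) := by
    rintro ⟨u, v⟩ ⟨u', v'⟩ h
    simp only [Prod.ext_iff, Prod.fst_sub, Prod.snd_sub, Prod.fst_add, Prod.snd_add] at h ⊢
    omega
  have hsum : (#(S.image fun x => x.1 + x.2) : ℝ) ≤ 9 * (B * B) := by
    refine card_le_nine_mul_of_forall_mem_closedBall (a := b.1) (b := b.2) hB hB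
      (forall_mem_image.2 fun x hx => mem_closedBall_prod_iff.1 (hS x hx).2.1)
  have hdiff := card_le_mul_card_image_of_injective (S := S) (K := C * (2 * A) ^ ε) hinj <| by
    intro w R hR
    refine hcircle (2 * A) (by linarith) (nsq w - 4 * c) (2 • a - w) R fun p hp => ?_
    obtain ⟨⟨u, v⟩, hx, rfl, rfl⟩ := hR p hp
    obtain ⟨hu, -, hc⟩ := hS _ hx
    refine ⟨?_, by rw [nsq_sub, hc]⟩
    have hsub : u - v = 2 • u - (u + v) := by abel
    rw [hsub, mem_closedBall, dist_sub_right, dist_eq_norm, ← smul_sub, two_smul, two_mul]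
    exact (norm_add_le _ _).trans (add_le_add (mem_closedBall_iff_norm.1 hu)
      (mem_closedBall_iff_norm.1 hu))
  calc (#S : ℝ) ≤ C * (2 * A) ^ ε * #(S.image fun x => x.1 + x.2) := hdiff
    _ ≤ C * (2 * A) ^ ε * (9 * (B * B)) := by gcongr
    _ = 9 * C * 2 ^ ε * (B ^ 2 * A ^ ε) := by
      rw [Real.mul_rpow zero_le_two (by linarith)]; ring

theorem exists_card_pairs_le_mul_rpow_of_fst_mul_fst_ne_zero {ε : ℝ} (hε : 0 < ε) :
    ∃ C : ℝ, 0 < C ∧ ∀ A B : ℝ, 1 ≤ A → 1 ≤ B → ∀ (c : ℤ) (a b : ℤ × ℤ)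
      (S : Finset ((ℤ × ℤ) × (ℤ × ℤ))),
      (∀ x ∈ S, x.1 ∈ closedBall a A ∧ x.2 ∈ closedBall b B ∧ latticeDot x.1 x.2 = c) →
      (∀ x ∈ S, x.1.1 * x.2.1 ≠ 0) → (#S : ℝ) ≤ C * (A * B) ^ (1 + ε) := by
  obtain ⟨C, hC, hhyperbola⟩ := exists_card_le_mul_rpow_of_mul_eq hε
  refine ⟨9 * C, by positivity, fun A B hA hB c a b S hS hne => ?_⟩
  have hAB : 1 ≤ A * B := one_le_mul_of_one_le_of_one_le hA hB
  simp only [mem_closedBall_prod_iff] at hS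
  have hinj : Function.Injective
      fun x : (ℤ × ℤ) × (ℤ × ℤ) => ((x.1.1, x.2.1), (x.1.2, x.2.2)) :=
    (Equiv.prodProdProdComm ℤ ℤ ℤ ℤ).injective
  have hsnd : (#(S.image fun x => (x.1.2, x.2.2)) : ℝ) ≤ 9 * (A * B) :=
    card_le_nine_mul_of_forall_mem_closedBall hA hB <| forall_mem_image.2 fun x hx =>
      ⟨(hS x hx).1.2, (hS x hx).2.1.2⟩
  have hfst := card_le_mul_card_image_of_injective (S := S) (K := C * (A * B) ^ ε) hinj <| by
    intro q R hR
    rcases R.eq_empty_or_nonempty with rfl | ⟨p₀, hp₀⟩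
    · rw [card_empty, Nat.cast_zero]; positivity
    have hconic (p) (hp : p ∈ R) : p ∈ closedBall (a.1, b.1) (A * B) ∧ p.1 * p.2 = c - q.1 * q.2 ∧
        p.1 * p.2 ≠ 0 := by
      obtain ⟨x, hx, rfl, rfl⟩ := hR p hp
      obtain ⟨⟨hu, -⟩, ⟨hv, -⟩, hc⟩ := hS x hx
      refine ⟨mem_closedBall_prod_iff.2 ?_, eq_sub_of_add_eq hc, hne x hx⟩
      exact ⟨closedBall_subset_closedBall (le_mul_of_one_le_right (by linarith) hB) hu,
        closedBall_subset_closedBall (le_mul_of_one_le_left (by linarith) hA) hv⟩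
    refine hhyperbola (A * B) hAB (c - q.1 * q.2) (a.1, b.1) R ?_ fun p h => ?_
    · exact (hconic p₀ hp₀).2.1 ▸ (hconic p₀ hp₀).2.2
    · exact ⟨(hconic p h).1, (hconic p h).2.1⟩
  calc (#S : ℝ) ≤ C * (A * B) ^ ε * #(S.image fun x => (x.1.2, x.2.2)) := hfst
    _ ≤ C * (A * B) ^ ε * (9 * (A * B)) := by gcongr
    _ = 9 * C * (A * B) ^ (1 + ε) := by
      rw [Real.rpow_one_add' (by positivity) (by positivity)]; ring

lemma card_pairs_le_nine_mul_of_fst_eq_zero_of_snd_eq_zero {A B : ℝ} {a b : ℤ × ℤ}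
    {S : Finset ((ℤ × ℤ) × (ℤ × ℤ))} (hA : 1 ≤ A) (hB : 1 ≤ B)
    (hS : ∀ x ∈ S, x.1 ∈ closedBall a A ∧ x.2 ∈ closedBall b B)
    (hzero : ∀ x ∈ S, x.1.1 = 0 ∧ x.2.2 = 0) : (#S : ℝ) ≤ 9 * (A * B) := by
  simp only [mem_closedBall_prod_iff] at hS
  have hinj : Set.InjOn (fun x : (ℤ × ℤ) × (ℤ × ℤ) => (x.1.2, x.2.1)) S := by
    intro x hx y hy hxy
    obtain ⟨hx₁, hx₂⟩ := hzero x hx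
    obtain ⟨hy₁, hy₂⟩ := hzero y hy
    obtain ⟨h₁, h₂⟩ := Prod.ext_iff.1 hxy
    exact Prod.ext (Prod.ext (hx₁.trans hy₁.symm) h₁) (Prod.ext h₂ (hx₂.trans hy₂.symm))
  rw [← card_image_of_injOn hinj]
  exact card_le_nine_mul_of_forall_mem_closedBall hA hB <| forall_mem_image.2 fun x hx =>
    ⟨(hS x hx).1.2, (hS x hx).2.1⟩

lemma exists_card_pairs_le_mul_rpow_of_fst_mul_fst_ne_zero_or {ε : ℝ} (hε : 0 < ε) :
    ∃ C : ℝ, 0 < C ∧ ∀ A B : ℝ, 1 ≤ A → 1 ≤ B → ∀ (c : ℤ) (a b : ℤ × ℤ)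
      (S : Finset ((ℤ × ℤ) × (ℤ × ℤ))),
      (∀ x ∈ S, x.1 ∈ closedBall a A ∧ x.2 ∈ closedBall b B ∧ latticeDot x.1 x.2 = c) →
      (∀ x ∈ S, x.1.1 * x.2.1 ≠ 0 ∨ x.1.1 = 0 ∧ x.2.2 = 0) →
      (#S : ℝ) ≤ C * (A * B) ^ (1 + ε) := by
  obtain ⟨C, hC, hgeneric⟩ := exists_card_pairs_le_mul_rpow_of_fst_mul_fst_ne_zero hε
  refine ⟨C + 9, by positivity, fun A B hA hB c a b S hS hS' => ?_⟩
  have h₁ := hgeneric A B hA hB c a b {x ∈ S | x.1.1 * x.2.1 ≠ 0}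
    (fun x hx => hS x (mem_filter.1 hx).1) fun x hx => (mem_filter.1 hx).2
  have h₂ : (#{x ∈ S | ¬x.1.1 * x.2.1 ≠ 0} : ℝ) ≤ 9 * (A * B) := by
    refine card_pairs_le_nine_mul_of_fst_eq_zero_of_snd_eq_zero (a := a) (b := b) hA hB
      (fun x hx => ?_) fun x hx => ?_
    · exact ⟨(hS x (mem_filter.1 hx).1).1, (hS x (mem_filter.1 hx).1).2.1⟩
    · exact (hS' x (mem_filter.1 hx).1).resolve_left (mem_filter.1 hx).2
  have hAB : A * B ≤ (A * B) ^ (1 + ε) :=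
    Real.self_le_rpow_of_one_le (one_le_mul_of_one_le_of_one_le hA hB) (by linarith)
  rw [← card_filter_add_card_filter_not (s := S) fun x => x.1.1 * x.2.1 ≠ 0, Nat.cast_add]
  linarith

/- A pair of nonzero vectors satisfies the alternative of the previous lemma, possibly after
exchanging the two coordinates. -/
theorem exists_card_pairs_le_mul_rpow_of_mem_of_mem {ε : ℝ} (hε : 0 < ε) :
    ∃ C : ℝ, 0 < C ∧ ∀ A B : ℝ, 1 ≤ A → 1 ≤ B → ∀ (c : ℤ) (a b : ℤ × ℤ)
      (S : Finset ((ℤ × ℤ) × (ℤ × ℤ))),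
      (∀ x ∈ S, x.1 ∈ closedBall a A ∧ x.2 ∈ closedBall b B ∧ latticeDot x.1 x.2 = c) →
      (∀ x ∈ S, x.1 ≠ 0 ∧ x.2 ≠ 0) → (#S : ℝ) ≤ C * (A * B) ^ (1 + ε) := by
  obtain ⟨C, hC, hhalf⟩ := exists_card_pairs_le_mul_rpow_of_fst_mul_fst_ne_zero_or hε
  refine ⟨2 * C, by positivity, fun A B hA hB c a b S hS hne => ?_⟩
  let P (x : (ℤ × ℤ) × (ℤ × ℤ)) : Prop := x.1.1 * x.2.1 ≠ 0 ∨ x.1.1 = 0 ∧ x.2.2 = 0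
  classical
  have h₁ := hhalf A B hA hB c a b {x ∈ S | P x} (fun x hx => hS x (mem_filter.1 hx).1)
    fun x hx => (mem_filter.1 hx).2
  have h₂ := hhalf A B hA hB c a.swap b.swap ({x ∈ S | ¬P x}.image (Prod.map .swap .swap))
    (forall_mem_image.2 fun x hx => ?_) (forall_mem_image.2 fun x hx => ?_)
  · rw [card_image_of_injective _ (Prod.swap_injective.prodMap Prod.swap_injective)] at h₂
    rw [← card_filter_add_card_filter_not (s := S) P, Nat.cast_add]
    linarith
  · obtain ⟨hu, hv, hc⟩ := hS x (mem_filter.1 hx).1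
    rw [mem_closedBall_prod_iff] at hu hv
    exact ⟨mem_closedBall_prod_iff.2 hu.symm, mem_closedBall_prod_iff.2 hv.symm,
      (add_comm _ _).trans hc⟩
  · obtain ⟨hu, hv⟩ := hne x (mem_filter.1 hx).1
    have hPx : ¬P x := (mem_filter.1 hx).2
    simp only [P, ne_eq, Prod.ext_iff, Prod.fst_zero, Prod.snd_zero, Prod.map_fst, Prod.map_snd,
      Prod.fst_swap, Prod.snd_swap, mul_eq_zero] at hu hv hPx ⊢
    tauto

lemma sq_mul_rpow_le_mul_rpow_one_add {A B ε : ℝ} (hε : 0 ≤ ε) (hB : 1 ≤ B) (hBA : B ≤ A) :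
    B ^ 2 * A ^ ε ≤ (A * B) ^ (1 + ε) := by
  have hA : 1 ≤ A := hB.trans hBA
  have hBε : 1 ≤ B ^ ε := Real.one_le_rpow hB hε
  calc B ^ 2 * A ^ ε = B * B * A ^ ε * 1 := by ring
    _ ≤ A * B * A ^ ε * B ^ ε := by gcongr
    _ = (A * B) ^ (1 + ε) := by
      rw [Real.rpow_one_add' (by positivity) (by positivity),
        Real.mul_rpow (by positivity) (by positivity)]
      ring

theorem exists_card_pairs_le_mul_min_of_mem_of_add_mem {ε : ℝ} (hε : 0 < ε) :
    ∃ C : ℝ, 0 < C ∧ ∀ A B : ℝ, 1 ≤ A → 1 ≤ B → ∀ (c : ℤ) (a b : ℤ × ℤ)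
      (S : Finset ((ℤ × ℤ) × (ℤ × ℤ))),
      (∀ x ∈ S, x.1 ∈ closedBall a A ∧ x.1 + x.2 ∈ closedBall b B ∧ latticeDot x.1 x.2 = c) →
      (∀ x ∈ S, x.1 ≠ 0 ∧ x.2 ≠ 0) →
      (#S : ℝ) ≤ C * min (B ^ 2 * A ^ ε) ((A * B) ^ (1 + ε)) := by
  obtain ⟨C₁, hC₁, hcircle⟩ := exists_card_pairs_le_mul_sq_mul_rpow_of_add_mem hε
  obtain ⟨C₂, hC₂, hpairs⟩ := exists_card_pairs_le_mul_rpow_of_mem_of_mem hε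
  refine ⟨C₁ + C₂ * 2 ^ (1 + ε), by positivity, fun A B hA hB c a b S hS hne => ?_⟩
  have hsum : (#S : ℝ) ≤ (C₁ + C₂ * 2 ^ (1 + ε)) * (B ^ 2 * A ^ ε) :=
    (hcircle A B hA hB c a b S hS).trans <| by
      gcongr; exact le_add_of_nonneg_right (by positivity)
  rw [mul_min_of_nonneg _ _ (by positivity), le_min_iff]
  refine ⟨hsum, ?_⟩
  rcases le_total B A with hBA | hAB
  · refine hsum.trans ?_
    gcongr
    exact sq_mul_rpow_le_mul_rpow_one_add hε.le hB hBA
  have hsnd (x) (hx : x ∈ S) : x.2 ∈ closedBall (b - a) (2 * B) := by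
    obtain ⟨hu, hw, -⟩ := hS x hx
    rw [mem_closedBall, ← add_sub_cancel_left x.1 x.2, two_mul]
    exact (dist_sub_sub_le _ _ _ _).trans (add_le_add hw (hu.trans hAB))
  calc (#S : ℝ) ≤ C₂ * (A * (2 * B)) ^ (1 + ε) :=
        hpairs A (2 * B) hA (by linarith) c a (b - a) S
          (fun x hx => ⟨(hS x hx).1, hsnd x hx, (hS x hx).2.2⟩) hne
    _ = C₂ * 2 ^ (1 + ε) * (A * B) ^ (1 + ε) := by
      rw [mul_left_comm, Real.mul_rpow zero_le_two (by positivity), mul_assoc]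
    _ ≤ (C₁ + C₂ * 2 ^ (1 + ε)) * (A * B) ^ (1 + ε) := by
      gcongr; exact le_add_of_nonneg_left hC₁.le

theorem exists_card_pairs_le_mul_min {ε : ℝ} (hε : 0 < ε) :
    ∃ C : ℝ, 0 < C ∧ ∀ N₁ N₂ N₃ : ℝ, 1 ≤ N₁ → 1 ≤ N₂ → 1 ≤ N₃ → ∀ (c : ℤ) (a₁ a₂ a₃ : ℤ × ℤ)
      (S : Finset ((ℤ × ℤ) × (ℤ × ℤ))),
      (∀ x ∈ S, x.1 ∈ closedBall a₁ N₁ ∧ x.1 + x.2 ∈ closedBall a₂ N₂ ∧ x.2 ∈ closedBall a₃ N₃ ∧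
        latticeDot x.1 x.2 = c) →
      (∀ x ∈ S, x.1 ≠ 0 ∧ x.2 ≠ 0) →
      (#S : ℝ) ≤ C * min (min (N₂ ^ 2 * min N₁ N₃ ^ ε) ((N₁ * N₂) ^ (1 + ε)))
        (min ((N₁ * N₃) ^ (1 + ε)) ((N₂ * N₃) ^ (1 + ε))) := by
  obtain ⟨C, hC, hpairs⟩ := exists_card_pairs_le_mul_rpow_of_mem_of_mem hε
  obtain ⟨C', hC', hmixed⟩ := exists_card_pairs_le_mul_min_of_mem_of_add_mem hε
  refine ⟨C + C', by positivity, fun N₁ N₂ N₃ hN₁ hN₂ hN₃ c a₁ a₂ a₃ S hS hne => ?_⟩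
  have h₁₃ : (#S : ℝ) ≤ (C + C') * (N₁ * N₃) ^ (1 + ε) :=
    (hpairs N₁ N₃ hN₁ hN₃ c a₁ a₃ S (fun x hx => ⟨(hS x hx).1, (hS x hx).2.2⟩) hne).trans <| by
      gcongr; exact le_add_of_nonneg_right hC'.le
  have h₂ {A : ℝ} (hA : 1 ≤ A) {a : ℤ × ℤ} {T : Finset ((ℤ × ℤ) × (ℤ × ℤ))}
      (hT : ∀ x ∈ T, x.1 ∈ closedBall a A ∧ x.1 + x.2 ∈ closedBall a₂ N₂ ∧ latticeDot x.1 x.2 = c)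
      (hne : ∀ x ∈ T, x.1 ≠ 0 ∧ x.2 ≠ 0) :
      (#T : ℝ) ≤ (C + C') * min (N₂ ^ 2 * A ^ ε) ((A * N₂) ^ (1 + ε)) :=
    (hmixed A N₂ hA hN₂ c a a₂ T hT hne).trans <| by
      gcongr; exact le_add_of_nonneg_left hC.le
  have h₁₂ := h₂ hN₁ (fun x hx => ⟨(hS x hx).1, (hS x hx).2.1, (hS x hx).2.2.2⟩) hne
  have h₃₂ := h₂ (a := a₃) (T := S.image .swap) hN₃ (forall_mem_image.2 fun x hx => ?_)
    (forall_mem_image.2 fun x hx => (hne x hx).symm)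
  · rw [card_image_of_injective S Prod.swap_injective, mul_comm N₃] at h₃₂
    simp only [mul_min_of_nonneg _ _ (add_pos hC hC').le, le_min_iff] at h₁₂ h₃₂ ⊢
    refine ⟨⟨?_, h₁₂.2⟩, h₁₃, h₃₂.2⟩
    rcases min_choice N₁ N₃ with h | h <;> rw [h]
    exacts [h₁₂.1, h₃₂.1]
  · rw [Prod.fst_swap, Prod.snd_swap, add_comm, latticeDot_comm]
    exact ⟨(hS x hx).2.2.1, (hS x hx).2.1, (hS x hx).2.2.2⟩

/-! ### Resonant triples -/

/-- The resonant triples `(n₁, n₂, n₃)` at frequency `n`: those contributing to the phase value `m`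
in the cubic interaction, each `nⱼ` being localised to a ball `closedBall cⱼ Nⱼ`. The balls are
those of the sup norm of `ℤ × ℤ` and their centres are arbitrary. -/
def resonantTriples (N₁ N₂ N₃ : ℝ) (c₁ c₂ c₃ : ℤ × ℤ) (m : ℤ) (n : ℤ × ℤ) :
    Set ((ℤ × ℤ) × (ℤ × ℤ) × (ℤ × ℤ)) :=
  {t | n = t.1 - t.2.1 + t.2.2 ∧ n ≠ t.1 ∧ n ≠ t.2.2 ∧ phiFn n t.1 t.2.1 t.2.2 = m ∧
    t.1 ∈ closedBall c₁ N₁ ∧ t.2.1 ∈ closedBall c₂ N₂ ∧ t.2.2 ∈ closedBall c₃ N₃}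

lemma resonantTriples_finite (N₁ N₂ N₃ : ℝ) (c₁ c₂ c₃ : ℤ × ℤ) (m : ℤ) (n : ℤ × ℤ) :
    (resonantTriples N₁ N₂ N₃ c₁ c₂ c₃ m n).Finite := by
  have hball (c : ℤ × ℤ) (N : ℝ) : (closedBall c N).Finite :=
    (isCompact_closedBall c N).finite_of_discrete
  exact ((hball c₁ N₁).prod ((hball c₂ N₂).prod (hball c₃ N₃))).subset
    fun t ht => ⟨ht.2.2.2.2.1, ht.2.2.2.2.2⟩

lemma phiFn_sub_add (n n₁ n₃ : ℤ × ℤ) :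
    phiFn n n₁ (n₁ + n₃ - n) n₃ = 2 * latticeDot (n - n₁) (n - n₃) := by
  simp only [phiFn, nsq, latticeDot, Prod.fst_sub, Prod.snd_sub, Prod.fst_add, Prod.snd_add]
  ring

theorem stmt5_general (ε : ℝ) (hε : 0 < ε) :
    ∃ C : ℝ, 0 < C ∧ ∀ N₁ N₂ N₃ : ℝ, 1 ≤ N₁ → 1 ≤ N₂ → 1 ≤ N₃ →
      ∀ (c₁ c₂ c₃ : ℤ × ℤ) (m : ℤ) (n : ℤ × ℤ),
      ((resonantTriples N₁ N₂ N₃ c₁ c₂ c₃ m n).ncard : ℝ) ≤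
        C * min (min (N₂ ^ 2 * min N₁ N₃ ^ ε) ((N₁ * N₂) ^ (1 + ε)))
          (min ((N₁ * N₃) ^ (1 + ε)) ((N₂ * N₃) ^ (1 + ε))) := by
  obtain ⟨C, hC, hpairs⟩ := exists_card_pairs_le_mul_min hε
  refine ⟨C, hC, fun N₁ N₂ N₃ h₁ h₂ h₃ c₁ c₂ c₃ m n => ?_⟩
  let F (t : (ℤ × ℤ) × (ℤ × ℤ) × (ℤ × ℤ)) : (ℤ × ℤ) × (ℤ × ℤ) := (n - t.1, n - t.2.2)
  have hfin := resonantTriples_finite N₁ N₂ N₃ c₁ c₂ c₃ m n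
  have hmid {t} (ht : t ∈ hfin.toFinset) : t.2.1 = t.1 + t.2.2 - n := by
    rw [((hfin.mem_toFinset).1 ht).1]; abel
  have hinj : Set.InjOn F hfin.toFinset := by
    intro t ht s hs hts
    obtain ⟨hts₁, hts₃⟩ := Prod.ext_iff.1 hts
    have h₁ : t.1 = s.1 := sub_right_injective hts₁
    have h₃ : t.2.2 = s.2.2 := sub_right_injective hts₃
    exact Prod.ext h₁ (Prod.ext (by rw [hmid ht, hmid hs, h₁, h₃]) h₃)
  rw [Set.ncard_eq_toFinset_card _ hfin, ← card_image_of_injOn hinj]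
  refine hpairs N₁ N₂ N₃ h₁ h₂ h₃ (m / 2) (n - c₁) (n - c₂) (n - c₃) _
    (forall_mem_image.2 fun t ht => ?_) (forall_mem_image.2 fun t ht => ?_)
  · obtain ⟨-, -, -, hphi, hb₁, hb₂, hb₃⟩ := (hfin.mem_toFinset).1 ht
    have hsum : n - t.1 + (n - t.2.2) = n - t.2.1 := by rw [hmid ht]; abel
    simp only [F, hsum, mem_closedBall, dist_sub_left]
    refine ⟨hb₁, hb₂, hb₃, ?_⟩
    rw [hmid ht, phiFn_sub_add] at hphi
    omega
  · obtain ⟨-, hn₁, hn₃, -⟩ := (hfin.mem_toFinset).1 ht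
    exact ⟨sub_ne_zero.2 hn₁, sub_ne_zero.2 hn₃⟩

lemma IsDyadic.one_le {N : ℝ} (hN : IsDyadic N) : 1 ≤ N := by
  obtain ⟨k, rfl⟩ := hN
  exact one_le_pow₀ one_le_two

lemma norm_le_znorm (n : ℤ × ℤ) : ‖n‖ ≤ znorm n := by
  rw [Prod.norm_def, Int.norm_eq_abs, Int.norm_eq_abs]
  exact max_le (Real.abs_le_sqrt (le_add_of_nonneg_right (sq_nonneg _)))
    (Real.abs_le_sqrt (le_add_of_nonneg_left (sq_nonneg _)))

lemma simDyadic.mem_closedBall {N : ℝ} {n : ℤ × ℤ} (hn : simDyadic N n) : n ∈ closedBall 0 N := by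
  rw [mem_closedBall_zero_iff]
  rcases hn with ⟨rfl, hn⟩ | ⟨-, -, hn⟩ <;> exact (norm_le_znorm n).trans hn

lemma setOf_sMem_subset_resonantTriples (N N₁ N₂ N₃ : ℝ) (m : ℤ) (n : ℤ × ℤ) :
    {t : (ℤ × ℤ) × (ℤ × ℤ) × (ℤ × ℤ) | SMem N N₁ N₂ N₃ m n t.1 t.2.1 t.2.2} ⊆
      resonantTriples N₁ N₂ N₃ 0 0 0 m n :=
  fun _ ⟨hn, hn₁, hn₃, hphi, _, h₁, h₂, h₃⟩ =>
    ⟨hn, hn₁, hn₃, hphi, h₁.mem_closedBall, h₂.mem_closedBall, h₃.mem_closedBall⟩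

theorem stmt5 (ε : ℝ) (hε : 0 < ε) :
    ∃ C : ℝ, 0 < C ∧ ∀ N N₁ N₂ N₃ : ℝ,
      IsDyadic N → IsDyadic N₁ → IsDyadic N₂ → IsDyadic N₃ → ∀ m : ℤ, ∀ n : ℤ × ℤ,
      (({t : (ℤ × ℤ) × (ℤ × ℤ) × (ℤ × ℤ) |
          SMem N N₁ N₂ N₃ m n t.1 t.2.1 t.2.2}).ncard : ℝ) ≤
        C * min (min (N₂ ^ 2 * (min N₁ N₃) ^ ε) ((N₁ * N₂) ^ (1 + ε)))
                (min ((N₁ * N₃) ^ (1 + ε)) ((N₂ * N₃) ^ (1 + ε))) := by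
  obtain ⟨C, hC, hcard⟩ := stmt5_general ε hε
  refine ⟨C, hC, fun N N₁ N₂ N₃ _ h₁ h₂ h₃ m n => le_trans ?_
    (hcard N₁ N₂ N₃ h₁.one_le h₂.one_le h₃.one_le 0 0 0 m n)⟩
  exact_mod_cast Set.ncard_le_ncard (setOf_sMem_subset_resonantTriples N N₁ N₂ N₃ m n)
    (resonantTriples_finite N₁ N₂ N₃ 0 0 0 m n)
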